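/- Let q be a prime power with gcd(q,30) = 1 and q ≡ 2 or 3 (mod 5). Let F(x_0,x_1,x_2,x_4,x_5) = (x_1^5 + x_2^5 − 5x_0 x_1 x_2 (x_1^2+x_2^2) + 5x_0^2 x_1 x_2 (x_1+x_2) + 5x_0^3 (x_1^2+x_2^2) − 5x_0^4 (x_1+x_2)) − (x_4^5 + x_5^5 − 5x_0 x_4 x_5 (x_4^2+x_5^2) + 5x_0^2 x_4 x_5 (x_4+x_5) + 5x_0^3 (x_4^2+x_5^2) − 5x_0^4 (x_4+x_5)). Then the number of solutions x ∈ 𝔽_q⁵ of F(x) = 0 is exactly q⁴; equivalently, the projective quintic threefold X̄ ⊂ ℙ⁴ defined by F = 0 has exactly q³ + q² + q + 1 points over 𝔽_q. -/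

import Mathlib

/-!
The form `P5h x₀ u v` is the sum of the two components of the (homogenized) `A₂` Chebyshev map
`T_{x₀} : (u, v) ↦ (chebA x₀ u v, chebA x₀ v u)`. If `a, b, c` are the roots of
`X³ - u X² + x₀ v X - x₀³`, then `chebA x₀ u v = a⁵ + b⁵ + c⁵` and
`x₀⁵ * chebA x₀ v u = (ab)⁵ + (bc)⁵ + (ca)⁵`, so `T_{x₀}` describes the effect of `t ↦ t⁵` on the
roots (for `x₀ = 0` it is just `(u⁵, v⁵)`).

The roots of a cubic over `𝔽_q` lie in `𝔽_{q⁶}`, and since `q ≡ ±2 (mod 5)` one has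
`q⁶ ≡ -1 (mod 5)`, so `5` is prime to `q⁶ - 1` and `t ↦ t⁵` has an inverse `t ↦ tᵏ` on `𝔽_{q⁶}`.
Hence `T_{x₀}` is injective (`cheb_injective`), and so a permutation of `𝔽_q²`.
Applying `T_{x₀}` to `(x₁, x₂)` and to `(x₄, x₅)` is then a permutation of `𝔽_q⁵` which turns
`F = 0` into the hyperplane `y₁ + y₂ = y₄ + y₅`, which has `q⁴` points.
-/

/-- The homogenization (with respect to `x_0`) of the degree-5 generalized Chebyshev
polynomial `P_5`. -/
def P5h {R : Type*} [CommRing R] (x0 u v : R) : R :=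
  u ^ 5 + v ^ 5 - 5 * x0 * u * v * (u ^ 2 + v ^ 2) + 5 * x0 ^ 2 * u * v * (u + v)
    + 5 * x0 ^ 3 * (u ^ 2 + v ^ 2) - 5 * x0 ^ 4 * (u + v)

/-- The homogeneous quintic `F(x_0,x_1,x_2,x_4,x_5)` defining the projective closure
`X̄ ⊂ ℙ⁴` of the affine Chebyshev threefold; the five variables are indexed by
`0, 1, 2, 3, 4`. -/
def Fhom {R : Type*} [CommRing R] (x : Fin 5 → R) : R :=
  P5h (x 0) (x 1) (x 2) - P5h (x 0) (x 3) (x 4)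

/-- One component of the homogenized `A₂` Chebyshev map of degree 5: the fifth power sum written
in the elementary symmetric functions `e₁ = u`, `e₂ = x0 * v`, `e₃ = x0 ^ 3`. The other component
is `chebA x0 v u`. -/
def chebA {R : Type*} [CommRing R] (x0 u v : R) : R :=
  u ^ 5 - 5 * x0 * u ^ 3 * v + 5 * x0 ^ 2 * u * v ^ 2 + 5 * x0 ^ 3 * u ^ 2 - 5 * x0 ^ 4 * v

theorem P5h_eq_chebA {R : Type*} [CommRing R] (x0 u v : R) :
    P5h x0 u v = chebA x0 u v + chebA x0 v u := by
  unfold P5h chebA; ring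

/-- A root in an extension of a monic cubic over `𝔽_q` lies in `𝔽_{q⁶}`, because its degree
divides `6`. -/
theorem pow_card_six_of_cubic {F K : Type*} [Field F] [Fintype F] [Field K] [Algebra F K]
    (r s t : F) (a : K)
    (ha : a ^ 3 - algebraMap F K r * a ^ 2 + algebraMap F K s * a - algebraMap F K t = 0) :
    a ^ (Fintype.card F ^ 6) = a := by
  classical
  set p : Polynomial F := Polynomial.X ^ 3 - Polynomial.C r * Polynomial.X ^ 2
    + Polynomial.C s * Polynomial.X - Polynomial.C t with hp
  have hdeg : p.natDegree = 3 := by rw [hp]; compute_degree!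
  have hmon : p.Monic := by rw [hp]; monicity!
  have hev : Polynomial.aeval a p = 0 := by simpa [hp] using ha
  have hint : IsIntegral F a := ⟨p, hmon, by simpa [Polynomial.aeval_def] using hev⟩
  have hle : (minpoly F a).natDegree ≤ 3 := by
    rw [← hdeg]; exact Polynomial.natDegree_le_of_dvd (minpoly.dvd F a hev) hmon.ne_zero
  have hpos : 0 < (minpoly F a).natDegree := minpoly.natDegree_pos hint
  have hfr := IntermediateField.adjoin.finrank hint
  have : FiniteDimensional F (IntermediateField.adjoin F {a}) :=
    IntermediateField.adjoin.finiteDimensional hint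
  have : Finite (IntermediateField.adjoin F {a}) := Module.finite_of_finite F
  have := Fintype.ofFinite (IntermediateField.adjoin F {a})
  have hcard : Fintype.card (IntermediateField.adjoin F {a})
      = Fintype.card F ^ (minpoly F a).natDegree := by
    rw [← hfr]; exact Module.card_eq_pow_finrank
  have hgen := FiniteField.pow_card (IntermediateField.AdjoinSimple.gen F a)
  have h1 : a ^ (Fintype.card F ^ (minpoly F a).natDegree) = a := by
    rw [← hcard]; simpa using congrArg (algebraMap (IntermediateField.adjoin F {a}) K) hgen
  have h2 : ∀ m, a ^ ((Fintype.card F ^ (minpoly F a).natDegree) ^ m) = a := by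
    intro m
    induction m with
    | zero => simp
    | succ m ih => rw [pow_succ, pow_mul, ih, h1]
  obtain ⟨m, hm⟩ : (minpoly F a).natDegree ∣ 6 := by
    interval_cases (minpoly F a).natDegree <;> decide
  rw [hm, pow_mul]; exact h2 m

/-- For `q ≡ ±2 (mod 5)`, fifth powers are inverted on `𝔽_{q⁶}` by a fixed power. -/
theorem exists_fifth_root_exponent {q : ℕ} (hq : q % 5 = 2 ∨ q % 5 = 3) :
    ∃ k : ℕ, ∀ {K : Type*} [Field K] (a : K), a ^ (q ^ 6) = a → (a ^ 5) ^ k = a := by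
  have hmod : q ^ 6 % 5 = 4 := by rcases hq with h | h <;> simp [Nat.pow_mod, h]
  -- `5 * k = 3 * q ^ 6 - 2 = 1 + 3 * (q ^ 6 - 1)`
  obtain ⟨k, hk⟩ : ∃ k, 5 * k + 2 = 3 * q ^ 6 := ⟨(3 * q ^ 6 - 2) / 5, by omega⟩
  refine ⟨k, fun {K} _ a ha => ?_⟩
  rw [← pow_mul]
  rcases eq_or_ne a 0 with rfl | h0
  · exact zero_pow (by omega)
  · have h : a ^ (5 * k) * a ^ 2 = a * a ^ 2 := by
      rw [← pow_add, hk, mul_comm 3, pow_mul, ha]; ring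
    exact mul_right_cancel₀ (pow_ne_zero 2 h0) h

theorem exists_three_roots {K : Type*} [Field K] [IsAlgClosed K] (r s t : K) :
    ∃ a b c : K, a + b + c = r ∧ a * b + b * c + c * a = s ∧ a * b * c = t := by
  obtain ⟨a, ha⟩ := IsAlgClosed.exists_root (Polynomial.X ^ 3 - Polynomial.C r * Polynomial.X ^ 2
    + Polynomial.C s * Polynomial.X - Polynomial.C t) (by
      have : (Polynomial.X ^ 3 - Polynomial.C r * Polynomial.X ^ 2
        + Polynomial.C s * Polynomial.X - Polynomial.C t).degree = 3 := by compute_degree!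
      rw [this]; decide)
  -- `b` is a root of the quadratic quotient of the cubic by `X - a`
  obtain ⟨b, hb⟩ := IsAlgClosed.exists_root (Polynomial.X ^ 2
    - Polynomial.C (r - a) * Polynomial.X + Polynomial.C (s - a * (r - a))) (by
      have : (Polynomial.X ^ 2 - Polynomial.C (r - a) * Polynomial.X
        + Polynomial.C (s - a * (r - a))).degree = 2 := by compute_degree!
      rw [this]; decide)
  simp [Polynomial.IsRoot] at ha hb
  refine ⟨a, b, r - a - b, by ring, by linear_combination (-1 : K) * hb, ?_⟩
  linear_combination ha - a * hb

/-- Three elements are determined, as a multiset, by their elementary symmetric functions. -/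
theorem multiset_eq_of_esymm {K : Type*} [Field K] {a b c a' b' c' : K}
    (h1 : a + b + c = a' + b' + c') (h2 : a * b + b * c + c * a = a' * b' + b' * c' + c' * a')
    (h3 : a * b * c = a' * b' * c') : ({a, b, c} : Multiset K) = {a', b', c'} := by
  have key : ∀ x y z : K, (({x, y, z} : Multiset K).map
      (fun w => Polynomial.X - Polynomial.C w)).prod = Polynomial.X ^ 3
      - Polynomial.C (x + y + z) * Polynomial.X ^ 2
      + Polynomial.C (x * y + y * z + z * x) * Polynomial.X - Polynomial.C (x * y * z) := by
    intro x y z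
    simp; ring
  rw [← Polynomial.roots_multiset_prod_X_sub_C {a, b, c},
    ← Polynomial.roots_multiset_prod_X_sub_C {a', b', c'}, key, key, h1, h2, h3]

/-- The `A₂` Chebyshev map is injective on `𝔽_q²` when `q ≡ ±2 (mod 5)`. -/
theorem cheb_injective {F : Type*} [Field F] [Fintype F]
    (h5 : Fintype.card F % 5 = 2 ∨ Fintype.card F % 5 = 3) {x0 u v u' v' : F}
    (hA : chebA x0 u v = chebA x0 u' v') (hB : chebA x0 v u = chebA x0 v' u') :
    u = u' ∧ v = v' := by
  obtain ⟨k, hk⟩ := exists_fifth_root_exponent h5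
  rcases eq_or_ne x0 0 with rfl | h0
  · have hF : ∀ a : F, (a ^ 5) ^ k = a := fun a => hk a (FiniteField.pow_card_pow 6 a)
    have e1 : u ^ 5 = u' ^ 5 := by simpa [chebA] using hA
    have e2 : v ^ 5 = v' ^ 5 := by simpa [chebA] using hB
    exact ⟨by rw [← hF u, e1, hF], by rw [← hF v, e2, hF]⟩
  let K := AlgebraicClosure F
  let f : F →+* K := algebraMap F K
  -- the `k`-th power undoes the fifth power on each root of the cubic attached to `(u, v)`
  have hroot : ∀ (u v : F) (a b c : K), a + b + c = f u → a * b + b * c + c * a = f (x0 * v) →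
      a * b * c = f (x0 ^ 3) → (a ^ 5) ^ k = a := by
    intro u v a b c h1 h2 h3
    refine hk a (pow_card_six_of_cubic u (x0 * v) (x0 ^ 3) a ?_)
    change a ^ 3 - f u * a ^ 2 + f (x0 * v) * a - f (x0 ^ 3) = 0
    rw [← h1, ← h2, ← h3]; ring
  have hmap : ∀ (u v : F) (a b c : K), a + b + c = f u → a * b + b * c + c * a = f (x0 * v) →
      a * b * c = f (x0 ^ 3) →
      (({a ^ 5, b ^ 5, c ^ 5} : Multiset K).map (· ^ k)) = {a, b, c} := by
    intro u v a b c h1 h2 h3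
    have ha := hroot u v a b c h1 h2 h3
    have hb := hroot u v b c a (by rw [← h1]; ring) (by rw [← h2]; ring) (by rw [← h3]; ring)
    have hc := hroot u v c a b (by rw [← h1]; ring) (by rw [← h2]; ring) (by rw [← h3]; ring)
    simp [ha, hb, hc]
  have hS1 : ∀ (u v : F) (a b c : K), a + b + c = f u → a * b + b * c + c * a = f (x0 * v) →
      a * b * c = f (x0 ^ 3) → a ^ 5 + b ^ 5 + c ^ 5 = f (chebA x0 u v) := by
    intro u v a b c h1 h2 h3
    have e : chebA x0 u v = u ^ 5 - 5 * u ^ 3 * (x0 * v) + 5 * u * (x0 * v) ^ 2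
        + 5 * u ^ 2 * x0 ^ 3 - 5 * (x0 * v) * x0 ^ 3 := by unfold chebA; ring
    rw [e]
    simp only [map_add, map_sub, map_mul f _ (x0 ^ 3), map_mul f _ (x0 * v), map_mul f _ u,
      map_mul f _ (u ^ 2), map_mul f _ (u ^ 3), map_mul f _ ((x0 * v) ^ 2), map_pow f u,
      map_pow f (x0 * v), map_ofNat]
    rw [← h1, ← h2, ← h3]; ring
  have hS2 : ∀ (u v : F) (a b c : K), a + b + c = f u → a * b + b * c + c * a = f (x0 * v) →
      a * b * c = f (x0 ^ 3) →
      a ^ 5 * b ^ 5 + b ^ 5 * c ^ 5 + c ^ 5 * a ^ 5 = f (x0 ^ 5 * chebA x0 v u) := by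
    intro u v a b c h1 h2 h3
    -- `ab, bc, ca` have elementary symmetric functions `e₂`, `e₁ * e₃`, `e₃ ^ 2`
    have e : x0 ^ 5 * chebA x0 v u = (x0 * v) ^ 5 - 5 * (x0 * v) ^ 3 * (u * x0 ^ 3)
        + 5 * (x0 * v) * (u * x0 ^ 3) ^ 2 + 5 * (x0 * v) ^ 2 * (x0 ^ 3) ^ 2
        - 5 * (u * x0 ^ 3) * (x0 ^ 3) ^ 2 := by unfold chebA; ring
    rw [e]
    generalize x0 ^ 3 = e3 at *
    generalize x0 * v = e2 at *
    simp only [map_add, map_sub, map_mul, map_pow, map_ofNat]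
    rw [← h1, ← h2, ← h3]; ring
  obtain ⟨a, b, c, h1, h2, h3⟩ := exists_three_roots (f u) (f (x0 * v)) (f (x0 ^ 3))
  obtain ⟨a', b', c', h1', h2', h3'⟩ := exists_three_roots (f u') (f (x0 * v')) (f (x0 ^ 3))
  have h5eq : ({a ^ 5, b ^ 5, c ^ 5} : Multiset K) = {a' ^ 5, b' ^ 5, c' ^ 5} := by
    apply multiset_eq_of_esymm
    · rw [hS1 u v a b c h1 h2 h3, hS1 u' v' a' b' c' h1' h2' h3', hA]
    · rw [hS2 u v a b c h1 h2 h3, hS2 u' v' a' b' c' h1' h2' h3', hB]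
    · rw [← mul_pow, ← mul_pow, ← mul_pow, ← mul_pow, h3, h3']
  have hset : ({a, b, c} : Multiset K) = {a', b', c'} := by
    rw [← hmap u v a b c h1 h2 h3, ← hmap u' v' a' b' c' h1' h2' h3', h5eq]
  have hs1 : a + b + c = a' + b' + c' := by
    simpa [add_assoc] using congrArg Multiset.sum hset
  -- `e₂` is read off from `∏ (1 + w) = 1 + e₁ + e₂ + e₃`
  have hs2 : (1 + a) * (1 + b) * (1 + c) = (1 + a') * (1 + b') * (1 + c') := by
    simpa [mul_assoc] using congrArg (fun s : Multiset K => (s.map (1 + ·)).prod) hset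
  have hu : f u = f u' := by rw [← h1, ← h1', hs1]
  have hv : f (x0 * v) = f (x0 * v') := by
    rw [← h2, ← h2']
    linear_combination hs2 - hs1 - h3 + h3'
  exact ⟨f.injective hu, mul_left_cancel₀ h0 (f.injective hv)⟩

/-- The hyperplane `y₁ + y₂ = y₃ + y₄` in `F⁵`, parametrized by `y₀, y₁, y₂, y₃`. -/
def hyperplaneEquiv (F : Type*) [Field F] :
    {y : Fin 5 → F // y 1 + y 2 - (y 3 + y 4) = 0} ≃ (Fin 4 → F) where
  toFun y := ![y.1 0, y.1 1, y.1 2, y.1 3]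
  invFun z := ⟨![z 0, z 1, z 2, z 3, z 1 + z 2 - z 3], by simp⟩
  left_inv := by
    rintro ⟨y, hy⟩
    ext i
    fin_cases i <;> simp
    linear_combination hy
  right_inv z := by
    ext i
    fin_cases i <;> simp

theorem card_affine_cone {F : Type*} [Field F] [Fintype F]
    (h5 : Fintype.card F % 5 = 2 ∨ Fintype.card F % 5 = 3) :
    Nat.card {x : Fin 5 → F // Fhom x = 0} = Fintype.card F ^ 4 := by
  let T : (Fin 5 → F) → (Fin 5 → F) := fun x =>
    ![x 0, chebA (x 0) (x 1) (x 2), chebA (x 0) (x 2) (x 1),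
      chebA (x 0) (x 3) (x 4), chebA (x 0) (x 4) (x 3)]
  have hT : Function.Injective T := by
    intro x y hxy
    have g0 : x 0 = y 0 := congrFun hxy 0
    have g1 : chebA (x 0) (x 1) (x 2) = chebA (y 0) (y 1) (y 2) := congrFun hxy 1
    have g2 : chebA (x 0) (x 2) (x 1) = chebA (y 0) (y 2) (y 1) := congrFun hxy 2
    have g3 : chebA (x 0) (x 3) (x 4) = chebA (y 0) (y 3) (y 4) := congrFun hxy 3
    have g4 : chebA (x 0) (x 4) (x 3) = chebA (y 0) (y 4) (y 3) := congrFun hxy 4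
    rw [← g0] at g1 g2 g3 g4
    obtain ⟨k1, k2⟩ := cheb_injective h5 g1 g2
    obtain ⟨k3, k4⟩ := cheb_injective h5 g3 g4
    ext i
    fin_cases i <;> assumption
  let e := Equiv.ofBijective T (Finite.injective_iff_bijective.mp hT)
  have e' : {x : Fin 5 → F // Fhom x = 0} ≃
      {y : Fin 5 → F // y 1 + y 2 - (y 3 + y 4) = 0} :=
    e.subtypeEquiv (fun x => by
      rw [Fhom, P5h_eq_chebA, P5h_eq_chebA]; rfl)
  rw [Nat.card_congr (e'.trans (hyperplaneEquiv F))]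
  simp

/-- For a finite field `𝔽_q` with `gcd(q,30) = 1` and `q ≡ 2` or `3 (mod 5)`, the
homogeneous equation `F = 0` has exactly `q⁴` solutions in `𝔽_q⁵`; equivalently, it
has exactly `(q-1)·(q³+q²+q+1)` nonzero solutions, so that the projective quintic
threefold `X̄ ⊂ ℙ⁴` has exactly `q³+q²+q+1` points over `𝔽_q`. -/
theorem card_points_projective_chebyshev_threefold {F : Type*} [Field F] [Fintype F]
    (h30 : Nat.gcd (Fintype.card F) 30 = 1)
    (h5 : Fintype.card F % 5 = 2 ∨ Fintype.card F % 5 = 3) :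
    Nat.card {x : Fin 5 → F // Fhom x = 0} = Fintype.card F ^ 4 ∧
    Nat.card {x : Fin 5 → F // Fhom x = 0 ∧ x ≠ 0}
      = (Fintype.card F - 1) *
          (Fintype.card F ^ 3 + Fintype.card F ^ 2 + Fintype.card F + 1) := by
  have hcone := card_affine_cone h5
  refine ⟨hcone, ?_⟩
  have hzero : (0 : Fin 5 → F) ∈ {x : Fin 5 → F | Fhom x = 0} := by simp [Fhom]
  have hdiff : Nat.card {x : Fin 5 → F // Fhom x = 0 ∧ x ≠ 0} = Fintype.card F ^ 4 - 1 := by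
    rw [← hcone]
    exact Set.ncard_sdiff_singleton_of_mem hzero
  rw [hdiff]
  obtain ⟨m, hm⟩ : ∃ m, Fintype.card F = m + 1 :=
    Nat.exists_eq_succ_of_ne_zero Fintype.card_ne_zero
  rw [hm, Nat.add_sub_cancel]
  apply Nat.sub_eq_of_eq_add
  ring
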